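/- Let Q ≥ 1, let y ∈ ℝ^Q have all components positive with Σ_{j=1}^Q y_j = 1, and let f : [0,∞) → ℝ^Q be differentiable with f'(t) = y − σ(f(t)) for all t ≥ 0. Set c := Σ_{j=1}^Q f(0)_j and define f_{*,c} ∈ ℝ^Q by (f_{*,c})_j = log y_j + (1/Q)(c − Σ_{i=1}^Q log y_i) = log y_j + (1/Q) Σ_{i=1}^Q (f(0)_i − log y_i). Then f(t) → f_{*,c} as t → ∞. -/

import Mathlib

open Finset Filter

/-- The softmax function on ℝ^Q. -/
noncomputable def softmax {Q : ℕ} (z : Fin Q → ℝ) : Fin Q → ℝ :=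
  fun j => Real.exp (z j) / ∑ i, Real.exp (z i)

/-!
The flow preserves `∑ j, f t j`, and `f_{*,c}` is the point with this coordinate sum at which
`σ = y`, so the displacement `g = f - f_{*,c}` has coordinate sum zero. On such displacements
softmax is strongly monotone, with a constant depending only on a bound for `|g|`. A first use of
monotonicity shows that `‖g‖²` does not increase, so the bound on `|g|`, and with it the constant,
is uniform in time; Grönwall's inequality then gives exponential decay of `‖g‖²`.
-/

section Decay

variable {a : ℝ}

theorem le_mul_exp_of_hasDerivWithinAt_le {u u' : ℝ → ℝ} {K : ℝ}
    (hu : ∀ t ∈ Set.Ici a, HasDerivWithinAt u (u' t) (Set.Ici a) t)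
    (hu' : ∀ t ∈ Set.Ici a, u' t ≤ K * u t) {t : ℝ} (ht : t ∈ Set.Ici a) :
    u t ≤ u a * Real.exp (K * (t - a)) := by
  have hcont : ContinuousOn u (Set.Icc a t) := fun s hs =>
    (hu s hs.1).continuousWithinAt.mono Set.Icc_subset_Ici_self
  have hgronwall := le_gronwallBound_of_liminf_deriv_right_le (ε := 0) hcont
    (fun s hs _ hr => ((hu s hs.1).mono (Set.Ici_subset_Ici.2 hs.1)).liminf_right_slope_le hr)
    le_rfl (fun s hs => by simpa only [add_zero] using hu' s hs.1) t ⟨ht, le_rfl⟩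
  rwa [gronwallBound_ε0] at hgronwall

theorem tendsto_zero_of_hasDerivWithinAt_le_neg_mul {u u' : ℝ → ℝ} {κ : ℝ} (hκ : 0 < κ)
    (hu : ∀ t ∈ Set.Ici a, HasDerivWithinAt u (u' t) (Set.Ici a) t)
    (hu' : ∀ t ∈ Set.Ici a, u' t ≤ -κ * u t) (hu_nonneg : ∀ t ∈ Set.Ici a, 0 ≤ u t) :
    Tendsto u atTop (nhds 0) := by
  have hrate : Tendsto (fun t => κ * (t - a)) atTop atTop :=
    (tendsto_atTop_add_const_right _ (-a) tendsto_id).const_mul_atTop hκ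
  have hbound : Tendsto (fun t => u a * Real.exp (-κ * (t - a))) atTop (nhds 0) := by
    simpa only [neg_mul, mul_zero, Function.comp_def] using
      (Real.tendsto_exp_neg_atTop_nhds_zero.comp hrate).const_mul (u a)
  refine squeeze_zero' ?_ ?_ hbound
  · filter_upwards [eventually_ge_atTop a] with t ht using hu_nonneg t ht
  · filter_upwards [eventually_ge_atTop a] with t ht
      using le_mul_exp_of_hasDerivWithinAt_le hu hu' ht

variable {E : Type*} [NormedAddCommGroup E] [InnerProductSpace ℝ E] {x x' : ℝ → E} {p : E}

theorem tendsto_of_inner_sub_deriv_le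
    (hx : ∀ t ∈ Set.Ici a, HasDerivWithinAt x (x' t) (Set.Ici a) t)
    (hcoercive : ∀ R, ∃ κ > 0, ∀ t ∈ Set.Ici a, ‖x t - p‖ ≤ R →
      inner ℝ (x t - p) (x' t) ≤ -κ * ‖x t - p‖ ^ 2) :
    Tendsto x atTop (nhds p) := by
  have hderiv : ∀ t ∈ Set.Ici a, HasDerivWithinAt (fun s => ‖x s - p‖ ^ 2)
      (2 * inner ℝ (x t - p) (x' t)) (Set.Ici a) t :=
    fun t ht => ((hx t ht).sub_const p).norm_sq
  have hdist_le : ∀ t ∈ Set.Ici a, ‖x t - p‖ ≤ ‖x a - p‖ := by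
    intro t ht
    have hinner_nonpos : ∀ s ∈ Set.Ici a, 2 * inner ℝ (x s - p) (x' s) ≤ 0 * ‖x s - p‖ ^ 2 := by
      intro s hs
      obtain ⟨κ, hκ, hle⟩ := hcoercive ‖x s - p‖
      have := hle s hs le_rfl
      linarith [mul_nonneg hκ.le (sq_nonneg ‖x s - p‖)]
    have hsq := le_mul_exp_of_hasDerivWithinAt_le hderiv hinner_nonpos ht
    rw [zero_mul, Real.exp_zero, mul_one] at hsq
    exact le_of_sq_le_sq hsq (norm_nonneg _)
  obtain ⟨κ, hκ, hle⟩ := hcoercive ‖x a - p‖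
  have hsq_lim : Tendsto (fun t => ‖x t - p‖ ^ 2) atTop (nhds 0) :=
    tendsto_zero_of_hasDerivWithinAt_le_neg_mul (mul_pos two_pos hκ) hderiv
      (fun t ht => by linarith [hle t ht (hdist_le t ht)]) (fun _ _ => sq_nonneg _)
  rw [tendsto_iff_norm_sub_tendsto_zero]
  simpa only [Real.sqrt_sq (norm_nonneg _), Real.sqrt_zero] using hsq_lim.sqrt

end Decay

section Inequalities

theorem sum_sq_le_sum_sub_const_sq {ι R : Type*} [CommRing R] [LinearOrder R]
    [IsStrictOrderedRing R] {s : Finset ι} {g : ι → R} (hg : ∑ i ∈ s, g i = 0) (c : R) :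
    ∑ i ∈ s, g i ^ 2 ≤ ∑ i ∈ s, (g i - c) ^ 2 := by
  have hexpand : ∑ i ∈ s, (g i - c) ^ 2 = ∑ i ∈ s, g i ^ 2 + #s * c ^ 2 := by
    simp only [sub_sq, sum_add_distrib, sum_sub_distrib, ← sum_mul, ← mul_sum, hg, sum_const,
      nsmul_eq_mul]
    ring
  rw [hexpand]
  exact le_add_of_nonneg_right (by positivity)

theorem exp_neg_mul_sq_le_mul_exp_sub_one {K x : ℝ} (hK : 0 ≤ K) (hx : -K ≤ x) :
    Real.exp (-K) * x ^ 2 ≤ x * (Real.exp x - 1) := by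
  rcases le_total 0 x with hx0 | hx0
  · calc Real.exp (-K) * x ^ 2 ≤ 1 * x ^ 2 := by
          gcongr
          exact Real.exp_le_one_iff.2 (neg_nonpos.2 hK)
      _ = x * x := by ring
      _ ≤ x * (Real.exp x - 1) := by
          gcongr
          exact le_sub_iff_add_le.2 (Real.add_one_le_exp x)
  · have htangent : Real.exp x - 1 ≤ Real.exp x * x := by
      have := mul_le_mul_of_nonneg_left (Real.add_one_le_exp (-x)) (Real.exp_pos x).le
      rw [← Real.exp_add, add_neg_cancel, Real.exp_zero] at this
      linarith
    calc Real.exp (-K) * x ^ 2 ≤ Real.exp x * x ^ 2 := by gcongr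
      _ = x * (Real.exp x * x) := by ring
      _ ≤ x * (Real.exp x - 1) := mul_le_mul_of_nonpos_left htangent hx0

end Inequalities

section Softmax

variable {Q : ℕ}

/-- The log-partition function `log ∑ᵢ exp zᵢ`, the logarithm of the normalizing constant of
softmax. -/
noncomputable def logSumExp (z : Fin Q → ℝ) : ℝ :=
  Real.log (∑ i, Real.exp (z i))

theorem softmax_log_add_const {y : Fin Q → ℝ} (hypos : ∀ j, 0 < y j) (hy : ∑ j, y j = 1)
    (c : ℝ) : softmax (fun j => Real.log (y j) + c) = y := by
  ext j
  simp only [softmax, Real.exp_add, Real.exp_log (hypos _), ← sum_mul, hy, one_mul]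
  exact mul_div_cancel_right₀ _ (Real.exp_pos c).ne'

variable [NeZero Q]

theorem sum_exp_pos (z : Fin Q → ℝ) : 0 < ∑ i, Real.exp (z i) :=
  sum_pos (fun i _ => Real.exp_pos (z i)) univ_nonempty

theorem exp_logSumExp (z : Fin Q → ℝ) : Real.exp (logSumExp z) = ∑ i, Real.exp (z i) :=
  Real.exp_log (sum_exp_pos z)

theorem softmax_apply_eq_exp_sub_logSumExp (z : Fin Q → ℝ) (j : Fin Q) :
    softmax z j = Real.exp (z j - logSumExp z) := by
  rw [Real.exp_sub, exp_logSumExp, softmax]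

theorem softmax_pos (z : Fin Q → ℝ) (j : Fin Q) : 0 < softmax z j :=
  div_pos (Real.exp_pos _) (sum_exp_pos z)

theorem sum_softmax (z : Fin Q → ℝ) : ∑ j, softmax z j = 1 := by
  simp only [softmax, ← sum_div, div_self (sum_exp_pos z).ne']

theorem logSumExp_le_add {z w : Fin Q → ℝ} {R : ℝ} (h : ∀ i, z i ≤ w i + R) :
    logSumExp z ≤ logSumExp w + R := by
  rw [← Real.exp_le_exp, Real.exp_add, exp_logSumExp, exp_logSumExp, sum_mul]
  refine sum_le_sum fun i _ => ?_
  rw [← Real.exp_add]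
  exact Real.exp_le_exp.2 (h i)

theorem softmax_sub_softmax_apply (z w : Fin Q → ℝ) (j : Fin Q) :
    softmax z j - softmax w j =
      softmax w j * (Real.exp (z j - w j - (logSumExp z - logSumExp w)) - 1) := by
  rw [softmax_apply_eq_exp_sub_logSumExp, softmax_apply_eq_exp_sub_logSumExp, mul_sub_one,
    ← Real.exp_add]
  congr 2
  ring

theorem sum_sub_const_mul_softmax_sub (z w g : Fin Q → ℝ) (c : ℝ) :
    ∑ j, (g j - c) * (softmax z j - softmax w j) = ∑ j, g j * (softmax z j - softmax w j) := by
  simp only [sub_mul _ c, sum_sub_distrib (fun j => g j * _), ← mul_sum]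
  rw [sum_sub_distrib, sum_softmax, sum_softmax, sub_self, mul_zero, sub_zero]

theorem mul_sum_sq_le_sum_mul_softmax_sub {z w : Fin Q → ℝ} {m R : ℝ} (hm : 0 ≤ m)
    (hmw : ∀ j, m ≤ softmax w j) (hsum : ∑ j, z j = ∑ j, w j) (hR : ∀ j, |z j - w j| ≤ R) :
    m * Real.exp (-(2 * R)) * ∑ j, (z j - w j) ^ 2 ≤
      ∑ j, (z j - w j) * (softmax z j - softmax w j) := by
  -- Shifting `z - w` by `L` leaves the right-hand side unchanged, because both softmax vectors sum
  -- to one, and turns it into a sum of nonnegative terms `σ(w)ⱼ * (x * (exp x - 1))`.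
  set L := logSumExp z - logSumExp w with hL
  have hR0 : 0 ≤ R := (abs_nonneg _).trans (hR 0)
  have hLR : L ≤ R :=
    sub_le_iff_le_add'.2 (logSumExp_le_add fun j => sub_le_iff_le_add'.1 (abs_le.1 (hR j)).2)
  calc m * Real.exp (-(2 * R)) * ∑ j, (z j - w j) ^ 2
      ≤ m * Real.exp (-(2 * R)) * ∑ j, (z j - w j - L) ^ 2 := by
        have hg : ∑ j, (z j - w j) = 0 := by rw [sum_sub_distrib, hsum, sub_self]
        exact mul_le_mul_of_nonneg_left (sum_sq_le_sum_sub_const_sq hg L) (by positivity)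
    _ = ∑ j, m * (Real.exp (-(2 * R)) * (z j - w j - L) ^ 2) := by
        simp only [mul_sum, mul_assoc]
    _ ≤ ∑ j, softmax w j * ((z j - w j - L) * (Real.exp (z j - w j - L) - 1)) := by
        refine sum_le_sum fun j _ => mul_le_mul (hmw j) ?_ (by positivity) (softmax_pos w j).le
        exact exp_neg_mul_sq_le_mul_exp_sub_one (by positivity) (by linarith [(abs_le.1 (hR j)).1])
    _ = ∑ j, (z j - w j - L) * (softmax z j - softmax w j) := by
        simp only [softmax_sub_softmax_apply z w, ← hL, mul_left_comm]
    _ = ∑ j, (z j - w j) * (softmax z j - softmax w j) :=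
        sum_sub_const_mul_softmax_sub z w _ L

theorem inner_toLp_sub_softmax_sub_le {z w : Fin Q → ℝ} {m R : ℝ} (hm : 0 ≤ m)
    (hmw : ∀ j, m ≤ softmax w j) (hsum : ∑ j, z j = ∑ j, w j)
    (hR : ‖WithLp.toLp 2 z - WithLp.toLp 2 w‖ ≤ R) :
    inner ℝ (WithLp.toLp 2 z - WithLp.toLp 2 w) (WithLp.toLp 2 (softmax w - softmax z)) ≤
      -(m * Real.exp (-(2 * R))) * ‖WithLp.toLp 2 z - WithLp.toLp 2 w‖ ^ 2 := by
  have hcoord : ∀ j, |z j - w j| ≤ R := fun j =>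
    (PiLp.norm_apply_le (WithLp.toLp 2 z - WithLp.toLp 2 w) j).trans hR
  have hinner : inner ℝ (WithLp.toLp 2 z - WithLp.toLp 2 w)
      (WithLp.toLp 2 (softmax w - softmax z)) =
        -∑ j, (z j - w j) * (softmax z j - softmax w j) := by
    simp only [PiLp.inner_apply, ← sum_neg_distrib]
    refine sum_congr rfl fun j _ => ?_
    simp only [PiLp.sub_apply, Pi.sub_apply, RCLike.inner_apply, conj_trivial]
    ring
  have hnorm : ‖WithLp.toLp 2 z - WithLp.toLp 2 w‖ ^ 2 = ∑ j, (z j - w j) ^ 2 := by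
    simp [EuclideanSpace.norm_sq_eq]
  rw [hinner, hnorm, neg_mul]
  exact neg_le_neg (mul_sum_sq_le_sum_mul_softmax_sub hm hmw hsum hcoord)

end Softmax

section Flow

variable {Q : ℕ} [NeZero Q] {w : Fin Q → ℝ} {f : ℝ → Fin Q → ℝ} {a : ℝ}

theorem sum_eq_sum_of_softmax_flow {y : Fin Q → ℝ} (hy : ∑ j, y j = 1)
    (hode : ∀ t ∈ Set.Ici a, HasDerivWithinAt f (y - softmax (f t)) (Set.Ici a) t)
    {t : ℝ} (ht : t ∈ Set.Ici a) : ∑ j, f t j = ∑ j, f a j := by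
  have hderiv : ∀ s ∈ Set.Ici a, HasDerivWithinAt (fun r => ∑ j, f r j) 0 (Set.Ici a) s := by
    intro s hs
    have h := HasDerivWithinAt.fun_sum (u := univ)
      fun j _ => hasDerivWithinAt_pi.1 (hode s hs) j
    simpa only [Pi.sub_apply, sum_sub_distrib, hy, sum_softmax, sub_self] using h
  exact constant_of_has_deriv_right_zero
    (fun s hs => (hderiv s hs.1).continuousWithinAt.mono Set.Icc_subset_Ici_self)
    (fun s hs => (hderiv s hs.1).mono (Set.Ici_subset_Ici.2 hs.1)) t ⟨ht, le_rfl⟩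

theorem tendsto_of_softmax_flow
    (hode : ∀ t ∈ Set.Ici a, HasDerivWithinAt f (softmax w - softmax (f t)) (Set.Ici a) t)
    (hsum : ∑ j, f a j = ∑ j, w j) : Tendsto f atTop (nhds w) := by
  have hode_toLp : ∀ t ∈ Set.Ici a, HasDerivWithinAt (fun s => WithLp.toLp 2 (f s))
      (WithLp.toLp 2 (softmax w - softmax (f t))) (Set.Ici a) t := fun t ht =>
    (PiLp.hasFDerivAt_toLp (𝕜 := ℝ) 2 (f t)).comp_hasDerivWithinAt t (hode t ht)
  obtain ⟨j₀, hj₀⟩ := Finite.exists_min (softmax w)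
  have hlim : Tendsto (fun t => WithLp.toLp 2 (f t)) atTop (nhds (WithLp.toLp 2 w)) :=
    tendsto_of_inner_sub_deriv_le hode_toLp fun R =>
      ⟨softmax w j₀ * Real.exp (-(2 * R)), mul_pos (softmax_pos w j₀) (Real.exp_pos _),
        fun _ ht hR => inner_toLp_sub_softmax_sub_le (softmax_pos w j₀).le hj₀
          ((sum_eq_sum_of_softmax_flow (sum_softmax w) hode ht).trans hsum) hR⟩
  exact ((PiLp.continuous_ofLp 2 _).tendsto _).comp hlim

end Flow

/-- Convergence of the cross-entropy gradient flow: if f' = y − σ(f) and the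
label y has positive components summing to one, then f(t) converges as t → ∞
to f_{*,c} with (f_{*,c})ⱼ = log yⱼ + (1/Q) Σᵢ (f(0)ᵢ − log yᵢ), where
c = Σⱼ f(0)ⱼ. -/
theorem stmt_16 (Q : ℕ) (hQ : 1 ≤ Q) (y : Fin Q → ℝ)
    (hypos : ∀ j, 0 < y j) (hy : ∑ j, y j = 1)
    (f : ℝ → Fin Q → ℝ)
    (hode : ∀ t ∈ Set.Ici (0 : ℝ),
      HasDerivWithinAt f (y - softmax (f t)) (Set.Ici 0) t)
    (fstarc : Fin Q → ℝ)
    (hfstarc : ∀ j, fstarc j =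
      Real.log (y j) + (1 / Q) * ∑ i, (f 0 i - Real.log (y i))) :
    Tendsto f atTop (nhds fstarc) := by
  have : NeZero Q := ⟨Nat.one_le_iff_ne_zero.1 hQ⟩
  have hsoftmax : softmax fstarc = y := by
    rw [funext hfstarc]
    exact softmax_log_add_const hypos hy _
  have hsum : ∑ j, f 0 j = ∑ j, fstarc j := by
    have hQ0 : (Q : ℝ) ≠ 0 := NeZero.ne _
    simp only [hfstarc, sum_add_distrib, sum_const, card_univ, Fintype.card_fin, nsmul_eq_mul,
      sum_sub_distrib]
    field_simp
    ring
  exact tendsto_of_softmax_flow (hsoftmax ▸ hode) hsum
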